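/- Let d ≥ 1, δ > 1, 0 < γ < 1, β > 0 and c > 0. The Poisson integral ∫_{m^{-1/γ}}^{s} du ∫_{|x|^d < m} dx ρ(β^{-1} u^γ |x|^d), with s = m^{-(δ-1)/(γδ)} and ρ(t) = min(1, t^{-δ}), satisfies: as m → ∞ it is asymptotically bounded below by (β ω_d δ/(2(1-γ)(δ-1))) · s^{1-γ}; in particular for all sufficiently large m the integral is at least (β ω_d δ/(2(1-γ)(δ-1))) · m^{-(1-γ)(δ-1)/(γδ)}. -/

import Mathlib

open MeasureTheory Filter

/-- Volume of the d-dimensional Euclidean unit ball. -/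
noncomputable def unitBallVol (d : ℕ) : ℝ :=
  (volume (Metric.ball (0 : EuclideanSpace ℝ (Fin d)) 1)).toReal

open Set

lemma radial_aux (d : ℕ) (hd : 1 ≤ d) (m : ℝ) (F : ℝ → ℝ) :
    ∫ x : EuclideanSpace ℝ (Fin d) in {x | ‖x‖ ^ d < m}, F (‖x‖ ^ d)
      = unitBallVol d * ∫ t in Ioo 0 m, F t := by
  have : Nonempty (Fin d) := ⟨⟨0, hd⟩⟩
  have hms : MeasurableSet {x : EuclideanSpace ℝ (Fin d) | ‖x‖ ^ d < m} :=
    measurableSet_lt (by fun_prop) measurable_const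
  rw [← integral_indicator hms]
  have h1 : ({x : EuclideanSpace ℝ (Fin d) | ‖x‖ ^ d < m}.indicator fun x => F (‖x‖ ^ d))
      = fun x => (fun r : ℝ => (Iio m).indicator F (r ^ d)) ‖x‖ := by
    ext x
    simp [indicator]
  rw [h1, integral_fun_norm_addHaar volume (fun r : ℝ => (Iio m).indicator F (r ^ d))]
  have hd0 : (0 : ℝ) < d := by exact_mod_cast hd
  have h2 := integral_comp_rpow_Ioi_of_pos (g := (Iio m).indicator F) hd0
  have h3 : ∫ t in Ioi (0:ℝ), (Iio m).indicator F t = ∫ t in Ioo 0 m, F t := by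
    rw [setIntegral_indicator measurableSet_Iio, Ioi_inter_Iio]
  rw [← h3, ← h2]
  have h4 : ∀ x : ℝ, ((d : ℝ) * x ^ ((d : ℝ) - 1)) • (Iio m).indicator F (x ^ (d : ℝ))
      = (d : ℝ) * (x ^ (d - 1) • (Iio m).indicator F (x ^ d)) := by
    intro x
    have : ((d : ℝ) - 1) = ((d - 1 : ℕ) : ℝ) := by
      rw [Nat.cast_sub hd]; simp
    rw [this, Real.rpow_natCast, Real.rpow_natCast]
    simp only [smul_eq_mul]; ring
  simp_rw [h4]
  rw [integral_const_mul]
  simp only [finrank_euclideanSpace, Fintype.card_fin, nsmul_eq_mul, smul_eq_mul, unitBallVol,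
    Measure.real]
  ring

lemma rho_integrable (δ c m : ℝ) (hc : 0 < c) :
    IntegrableOn (fun t : ℝ => min 1 ((c * t) ^ (-δ))) (Ioo 0 m) := by
  refine Measure.integrableOn_of_bounded (M := 1) (by simp) ?_ ?_
  · exact (by fun_prop : Measurable fun t : ℝ => min 1 ((c * t) ^ (-δ))).aestronglyMeasurable
  · filter_upwards [ae_restrict_mem measurableSet_Ioo] with t ht
    have : 0 ≤ (c * t) ^ (-δ) := Real.rpow_nonneg (mul_nonneg hc.le ht.1.le) _
    rw [Real.norm_eq_abs, abs_of_nonneg (le_min zero_le_one this)]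
    exact min_le_left _ _

lemma rho_antitone (δ c c' m : ℝ) (hδ : 1 < δ) (hc : 0 < c) (hcc : c ≤ c') :
    ∫ t in Ioo 0 m, min 1 ((c' * t) ^ (-δ)) ≤ ∫ t in Ioo 0 m, min 1 ((c * t) ^ (-δ)) := by
  refine setIntegral_mono_on (rho_integrable δ c' m (hc.trans_le hcc)) (rho_integrable δ c m hc)
    measurableSet_Ioo ?_
  intro t ht
  refine min_le_min le_rfl ?_
  exact Real.rpow_le_rpow_of_nonpos (mul_pos hc ht.1)
    (mul_le_mul_of_nonneg_right hcc ht.1.le) (by linarith)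

lemma rho_formula (δ c m : ℝ) (hδ : 1 < δ) (hc : 0 < c) (hm : 1 ≤ c * m) :
    ∫ t in Ioo 0 m, min 1 ((c * t) ^ (-δ))
      = c⁻¹ * (δ / (δ - 1) - (c * m) ^ (1 - δ) / (δ - 1)) := by
  have hm0 : 0 < m := by
    by_contra h
    push Not at h
    nlinarith [mul_nonneg hc.le (neg_nonneg.2 h)]
  have hle : c⁻¹ ≤ m := by rw [inv_le_iff_one_le_mul₀' hc]; exact hm
  have hci : 0 < c⁻¹ := inv_pos.2 hc
  have hI := rho_integrable δ c m hc
  rw [← integrableOn_Ioc_iff_integrableOn_Ioo] at hI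
  rw [← integral_Ioc_eq_integral_Ioo, ← intervalIntegral.integral_of_le hm0.le,
    ← intervalIntegral.integral_add_adjacent_intervals (b := c⁻¹)]
  · have e1 : ∫ t in (0:ℝ)..c⁻¹, min 1 ((c * t) ^ (-δ)) = ∫ t in (0:ℝ)..c⁻¹, (1:ℝ) := by
      refine intervalIntegral.integral_congr_ae (Eventually.of_forall ?_)
      intro t ht
      rw [uIoc_of_le hci.le] at ht
      refine min_eq_left (Real.one_le_rpow_of_pos_of_le_one_of_nonpos (mul_pos hc ht.1) ?_
        (by linarith))
      calc c * t ≤ c * c⁻¹ := mul_le_mul_of_nonneg_left ht.2 hc.le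
        _ = 1 := mul_inv_cancel₀ hc.ne'
    have e2 : ∫ t in c⁻¹..m, min 1 ((c * t) ^ (-δ)) = ∫ t in c⁻¹..m, (c * t) ^ (-δ) := by
      refine intervalIntegral.integral_congr_ae (Eventually.of_forall ?_)
      intro t ht
      rw [uIoc_of_le hle] at ht
      refine min_eq_right (Real.rpow_le_one_of_one_le_of_nonpos ?_ (by linarith))
      calc 1 = c * c⁻¹ := (mul_inv_cancel₀ hc.ne').symm
        _ ≤ c * t := mul_le_mul_of_nonneg_left ht.1.le hc.le
    rw [e1, e2, intervalIntegral.integral_comp_mul_left (fun y => y ^ (-δ)) hc.ne',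
      mul_inv_cancel₀ hc.ne', integral_rpow]
    · have h1 : δ - 1 ≠ 0 := by linarith
      have h2 : 1 - δ ≠ 0 := by linarith
      have : -δ + 1 = 1 - δ := by ring
      rw [this, Real.one_rpow, intervalIntegral.integral_const]
      have h3 : ((c * m) ^ (1 - δ) - 1) / (1 - δ) = (1 - (c * m) ^ (1 - δ)) / (δ - 1) := by
        rw [div_eq_div_iff h2 h1]; ring
      rw [h3]
      simp only [smul_eq_mul, sub_zero, mul_one]
      field_simp
      ring
    · right
      refine ⟨by linarith, ?_⟩
      rw [uIcc_of_le hm]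
      intro h; linarith [h.1]
  · rw [intervalIntegrable_iff_integrableOn_Ioc_of_le hci.le]
    exact hI.mono_set (Ioc_subset_Ioc le_rfl hle)
  · rw [intervalIntegrable_iff_integrableOn_Ioc_of_le hle]
    exact hI.mono_set (Ioc_subset_Ioc hci.le le_rfl)

/-- with s_m = m^{-(δ-1)/(γδ)} and ρ(t) = min(1,t^{-δ}), for all
sufficiently large m the integral ∫_{m^{-1/γ}}^{s_m} du ∫_{|x|^d<m} ρ(β⁻¹ u^γ |x|^d) dx
is at least (βω_dδ/(2(1-γ)(δ-1))) m^{-(1-γ)(δ-1)/(γδ)}. -/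
theorem expected_powerful_neighbours_lower_bound (d : ℕ) (hd : 1 ≤ d) (δ γ β : ℝ)
    (hδ : 1 < δ) (hγ0 : 0 < γ) (hγ1 : γ < 1) (hβ : 0 < β) :
    ∀ᶠ m : ℝ in atTop,
      β * unitBallVol d * δ / (2 * (1 - γ) * (δ - 1)) * m ^ (-((1 - γ) * (δ - 1) / (γ * δ)))
        ≤ ∫ u in (m ^ (-(1/γ)))..(m ^ (-((δ - 1) / (γ * δ)))),
            ∫ x : EuclideanSpace ℝ (Fin d) in {x | ‖x‖ ^ d < m},
              min 1 ((β⁻¹ * u ^ γ * ‖x‖ ^ d) ^ (-δ)) := by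
  have hω : 0 ≤ unitBallVol d := ENNReal.toReal_nonneg
  have hδ1 : 0 < δ - 1 := by linarith
  have hγ' : 0 < 1 - γ := by linarith
  obtain ⟨T, hT1, hTβ, hTδ⟩ : ∃ T : ℝ, 1 ≤ T ∧ β⁻¹ ≤ T ∧ T ^ (1 - δ) ≤ δ / 4 := by
    have h := (tendsto_rpow_neg_atTop hδ1).eventually (eventually_le_nhds
      (show (0:ℝ) < δ / 4 by linarith))
    obtain ⟨T, h1, h2, h3⟩ :=
      ((eventually_ge_atTop (1:ℝ)).and ((eventually_ge_atTop β⁻¹).and h)).exists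
    exact ⟨T, h1, h2, by simpa using h3⟩
  have hT0 : 0 < T := by linarith
  set K : ℝ := (β * T) ^ (1 / γ) with hK
  have hβT : 1 ≤ β * T := by
    rwa [← inv_le_iff_one_le_mul₀' hβ]
  have hK1 : 1 ≤ K := Real.one_le_rpow hβT (by positivity)
  have hK0 : 0 < K := by linarith
  have hKγ : K ^ γ = β * T := by
    rw [hK, ← Real.rpow_mul (by linarith), one_div_mul_cancel hγ0.ne', Real.rpow_one]
  set ε : ℝ := (1 / 3 : ℝ) ^ (1 / (1 - γ)) with hε
  have hε0 : 0 < ε := by positivity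
  have hε1 : ε ≤ 1 := Real.rpow_le_one (by norm_num) (by norm_num) (by positivity)
  have hεγ : ε ^ (1 - γ) = 1 / 3 := by
    rw [hε, ← Real.rpow_mul (by norm_num), one_div_mul_cancel hγ'.ne', Real.rpow_one]
  have hev := (tendsto_rpow_neg_atTop (show 0 < 1 / (γ * δ) by positivity)).eventually
    (eventually_le_nhds (show (0:ℝ) < ε / K by positivity))
  filter_upwards [hev, eventually_gt_atTop (0:ℝ)] with m hm hm0
  have hin : ∀ u : ℝ, ∫ x : EuclideanSpace ℝ (Fin d) in {x | ‖x‖ ^ d < m},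
      min 1 ((β⁻¹ * u ^ γ * ‖x‖ ^ d) ^ (-δ))
      = unitBallVol d * ∫ t in Ioo 0 m, min 1 ((β⁻¹ * u ^ γ * t) ^ (-δ)) := fun u =>
    radial_aux d hd m (fun t => min 1 ((β⁻¹ * u ^ γ * t) ^ (-δ)))
  simp_rw [hin]
  set a : ℝ := m ^ (-(1 / γ)) with ha
  set s : ℝ := m ^ (-((δ - 1) / (γ * δ))) with hs
  have ha0 : 0 < a := by positivity
  have hs0 : 0 < s := by positivity
  have hb0 : 0 < K * a := by positivity
  have hab : a ≤ K * a := by nlinarith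
  have hbs' : K * a ≤ ε * s := by
    have : a = s * m ^ (-(1 / (γ * δ))) := by
      rw [ha, hs, ← Real.rpow_add hm0]
      congr 1
      field_simp
      ring
    rw [this]
    rw [le_div_iff₀ hK0] at hm
    nlinarith
  have hbs : K * a ≤ s := by nlinarith
  have hbγ : (K * a) ^ (1 - γ) ≤ 1 / 3 * s ^ (1 - γ) := by
    rw [← hεγ, ← Real.mul_rpow hε0.le hs0.le]
    exact Real.rpow_le_rpow hb0.le hbs' hγ'.le
  have hsγ : m ^ (-((1 - γ) * (δ - 1) / (γ * δ))) = s ^ (1 - γ) := by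
    rw [hs, ← Real.rpow_mul hm0.le]
    congr 1
    ring
  rw [hsγ]
  have haγ : a ^ γ * m = 1 := by
    rw [ha, ← Real.rpow_mul hm0.le, neg_mul, one_div_mul_cancel hγ0.ne', Real.rpow_neg_one,
      inv_mul_cancel₀ hm0.ne']
  set J : ℝ → ℝ := fun u => unitBallVol d * ∫ t in Ioo 0 m, min 1 ((β⁻¹ * u ^ γ * t) ^ (-δ))
    with hJ
  have hanti : ∀ p, 0 < p → AntitoneOn J (Icc p s) := by
    intro p hp u hu v hv huv
    have hu0 : 0 < u := hp.trans_le hu.1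
    refine mul_le_mul_of_nonneg_left (rho_antitone δ _ _ m hδ (by positivity) ?_) hω
    gcongr
  have hInt : ∀ p q, 0 < p → p ≤ q → q ≤ s → IntervalIntegrable J volume p q := by
    intro p q hp hpq hq
    refine AntitoneOn.intervalIntegrable ?_
    rw [uIcc_of_le hpq]
    exact (hanti p hp).mono (Icc_subset_Icc le_rfl hq)
  have hJ0 : ∀ u, 0 < u → 0 ≤ J u := by
    intro u hu
    refine mul_nonneg hω (setIntegral_nonneg measurableSet_Ioo ?_)
    intro t ht
    have := ht.1
    exact le_min zero_le_one (by positivity)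
  have hlow : ∀ u ∈ Icc (K * a) s,
      unitBallVol d * β * (3 / 4 * (δ / (δ - 1))) * u ^ (-γ) ≤ J u := by
    intro u hu
    have hu0 : 0 < u := hb0.trans_le hu.1
    have hT : T ≤ β⁻¹ * u ^ γ * m := by
      have h1 : (K * a) ^ γ ≤ u ^ γ := Real.rpow_le_rpow hb0.le hu.1 hγ0.le
      rw [Real.mul_rpow hK0.le ha0.le, hKγ] at h1
      calc T = β⁻¹ * (β * T * a ^ γ) * m := by
            rw [show β⁻¹ * (β * T * a ^ γ) * m = β⁻¹ * β * T * (a ^ γ * m) by ring, haγ,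
              inv_mul_cancel₀ hβ.ne']; ring
        _ ≤ _ := by gcongr
    have h2 : (β⁻¹ * u ^ γ * m) ^ (1 - δ) ≤ δ / 4 :=
      (Real.rpow_le_rpow_of_nonpos hT0 hT (by linarith)).trans hTδ
    have hup : 0 < u ^ γ := by positivity
    rw [hJ]
    dsimp only
    rw [rho_formula δ _ m hδ (by positivity) (hT1.trans hT), Real.rpow_neg hu0.le, mul_inv,
      inv_inv]
    have h3 : 3 / 4 * (δ / (δ - 1)) ≤ δ / (δ - 1) - (β⁻¹ * u ^ γ * m) ^ (1 - δ) / (δ - 1) := by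
      rw [← sub_div, ← mul_div_assoc]
      gcongr
      linarith
    calc _ = unitBallVol d * (β * (u ^ γ)⁻¹ * (3 / 4 * (δ / (δ - 1)))) := by ring
      _ ≤ _ := by gcongr
  have hpw : IntervalIntegrable (fun u : ℝ =>
      unitBallVol d * β * (3 / 4 * (δ / (δ - 1))) * u ^ (-γ)) volume (K * a) s :=
    (intervalIntegral.intervalIntegrable_rpow' (by linarith)).const_mul _
  have hC : 0 ≤ unitBallVol d * β * (3 / 4 * (δ / (δ - 1))) := by positivity
  calc β * unitBallVol d * δ / (2 * (1 - γ) * (δ - 1)) * s ^ (1 - γ)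
      = unitBallVol d * β * (3 / 4 * (δ / (δ - 1))) *
          ((s ^ (1 - γ) - 1 / 3 * s ^ (1 - γ)) / (1 - γ)) := by
        field_simp
        ring
    _ ≤ unitBallVol d * β * (3 / 4 * (δ / (δ - 1))) *
          ((s ^ (1 - γ) - (K * a) ^ (1 - γ)) / (1 - γ)) := by gcongr
    _ = ∫ u in (K * a)..s, unitBallVol d * β * (3 / 4 * (δ / (δ - 1))) * u ^ (-γ) := by
        rw [intervalIntegral.integral_const_mul, integral_rpow (Or.inl (by linarith)),
          show -γ + 1 = 1 - γ by ring]
    _ ≤ ∫ u in (K * a)..s, J u :=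
        intervalIntegral.integral_mono_on hbs hpw (hInt _ _ hb0 hbs le_rfl) hlow
    _ ≤ (∫ u in a..(K * a), J u) + ∫ u in (K * a)..s, J u := by
        have := intervalIntegral.integral_nonneg hab (f := J) (μ := volume)
          (fun u hu => hJ0 u (ha0.trans_le hu.1))
        linarith
    _ = ∫ u in a..s, J u :=
        intervalIntegral.integral_add_adjacent_intervals (hInt _ _ ha0 hab hbs)
          (hInt _ _ hb0 hbs le_rfl)
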